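/- arXiv:2507.06142 — 5 statements merged into one kernel-verified Lean document; each statement's English description precedes it below -/
import Mathlib

section
/- Let f : ℝ → ℂ be defined by f(t) = e^{i t²}/(1 + t²). Then f is Lebesgue integrable on ℝ, and π^{3/2} · ξ² · |𝓕[f](ξ)| → 1 as |ξ| → +∞. In particular, 𝓕[f] decays slowly: there is no a > 0 such that 𝓕[f](ξ) = O(e^{−a|ξ|}) as |ξ| → ∞, and there is no r > 2 such that 𝓕[f](ξ) = O(|ξ|^{−r}) as |ξ| → ∞. -/
open Filter MeasureTheory FourierTransform Real Asymptotics

lemma aux_split (k : ℝ → ℂ) (hk : IntegrableOn k (Set.Ioi 0))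
    (hk' : IntegrableOn (fun s => k (-s)) (Set.Ioi 0)) :
    Integrable k ∧ ∫ s, k s = (∫ s in Set.Ioi (0:ℝ), k (-s)) + ∫ s in Set.Ioi (0:ℝ), k s := by
  have h1 : IntegrableOn k (Set.Iic 0) := by
    rw [← Measure.map_neg_eq_self (volume : Measure ℝ)]
    let m : MeasurableEmbedding fun x : ℝ => -x := (Homeomorph.neg ℝ).measurableEmbedding
    rw [m.integrableOn_map_iff]
    simp_rw [Function.comp_def, Set.neg_preimage, Set.neg_Iic, neg_zero]
    exact Iff.mpr integrableOn_Ici_iff_integrableOn_Ioi hk'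
  constructor
  · rw [← integrableOn_univ, ← Set.Iic_union_Ioi (a := (0:ℝ))]
    exact h1.union hk
  · rw [integral_comp_neg_Ioi, neg_zero, intervalIntegral.integral_Iic_add_Ioi h1 hk]

/-- the two-sided exponential -/
noncomputable def auxE (s : ℝ) : ℂ := (π : ℂ) * Complex.exp (-2 * π * (|s| : ℝ))

lemma auxE_cont : Continuous auxE := by
  unfold auxE; fun_prop

lemma auxE_int : Integrable auxE := by
  have h := integrableOn_exp_mul_complex_Ioi (a := -2 * π) (by simp [pi_pos]) 0
  have h2 : IntegrableOn auxE (Set.Ioi 0) := by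
    refine IntegrableOn.congr_fun (h.const_mul (π : ℂ)) ?_ measurableSet_Ioi
    intro s hs
    simp only [auxE, abs_of_pos (show 0 < s from hs)]
  refine (aux_split auxE h2 ?_).1
  have h3 : (fun s => auxE (-s)) = auxE := by ext s; simp [auxE]
  rw [h3]
  exact h2

lemma auxE_fourier (t : ℝ) : 𝓕 auxE t = 1 / (1 + (t:ℂ)^2) := by
  rw [Real.fourier_eq']
  have ha1 : (-2 * π - 2 * π * t * Complex.I : ℂ).re < 0 := by simp [pi_pos]
  have ha2 : (-2 * π + 2 * π * t * Complex.I : ℂ).re < 0 := by simp [pi_pos]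
  have e1 : ∀ s ∈ Set.Ioi (0:ℝ), (π:ℂ) * Complex.exp ((-2 * π - 2 * π * t * Complex.I : ℂ) * s) =
      Complex.exp (↑(-2 * π * inner ℝ s t) * Complex.I) • auxE s := by
    intro s hs
    rw [auxE, abs_of_pos (show 0 < s from hs), smul_eq_mul, mul_left_comm, ← Complex.exp_add]
    congr 2
    simp
    ring
  have e2 : ∀ s ∈ Set.Ioi (0:ℝ), (π:ℂ) * Complex.exp ((-2 * π + 2 * π * t * Complex.I : ℂ) * s) =
      Complex.exp (↑(-2 * π * inner ℝ (-s) t) * Complex.I) • auxE (-s) := by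
    intro s hs
    rw [auxE, abs_neg, abs_of_pos (show 0 < s from hs), smul_eq_mul, mul_left_comm,
      ← Complex.exp_add]
    congr 2
    simp
    ring
  rw [(aux_split _ ?_ ?_).2]
  · rw [← setIntegral_congr_fun measurableSet_Ioi e1, ← setIntegral_congr_fun measurableSet_Ioi e2,
      integral_const_mul, integral_const_mul, integral_exp_mul_complex_Ioi ha1,
      integral_exp_mul_complex_Ioi ha2]
    have hp : (π : ℂ) ≠ 0 := by exact_mod_cast pi_ne_zero
    have h1 : (-2 * π - 2 * π * t * Complex.I : ℂ) ≠ 0 := fun h => by rw [h] at ha1; simp at ha1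
    have h2 : (-2 * π + 2 * π * t * Complex.I : ℂ) ≠ 0 := fun h => by rw [h] at ha2; simp at ha2
    have h3 : (1 + (t:ℂ)^2) ≠ 0 := by
      have : (1 + t^2 : ℝ) ≠ 0 := by positivity
      exact_mod_cast this
    simp only [Complex.ofReal_zero, mul_zero, Complex.exp_zero]
    rw [← mul_add, div_add_div _ _ h2 h1, mul_div_assoc', div_eq_div_iff (mul_ne_zero h2 h1) h3]
    linear_combination (4 * (π:ℂ)^2 * t^2) * Complex.I_sq
  · exact IntegrableOn.congr_fun ((integrableOn_exp_mul_complex_Ioi ha1 0).const_mul (π : ℂ)) e1 measurableSet_Ioi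
  · exact IntegrableOn.congr_fun ((integrableOn_exp_mul_complex_Ioi ha2 0).const_mul (π : ℂ)) e2 measurableSet_Ioi

lemma aux_eps (b : ℂ) (hb : 0 < b.re) (ξ : ℝ) :
    ∫ t : ℝ, 1 / (1 + (t:ℂ)^2) * Complex.exp (-π * b * t ^ 2 + 2 * π * (-Complex.I * ξ) * t) =
    ∫ s : ℝ, auxE s * (1 / b ^ (1 / 2 : ℂ) * Complex.exp (-π / b * (s + ξ) ^ 2)) := by
  have hg : Integrable (fun t : ℝ => Complex.exp (-π * b * t ^ 2 + 2 * π * (-Complex.I * ξ) * t)) := by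
    have := integrable_cexp_quadratic (b := π * b) (by simpa using mul_pos pi_pos hb)
      (2 * π * (-Complex.I * ξ)) 0
    simpa using this
  have := VectorFourier.integral_fourierIntegral_smul_eq_flip (μ := volume) (ν := volume)
    (L := innerₗ ℝ) (e := 𝐞) (f := auxE) continuous_fourierChar (by fun_prop) auxE_int hg
  have h1 : ∀ t, VectorFourier.fourierIntegral 𝐞 volume (innerₗ ℝ) auxE t = 1 / (1 + (t:ℂ)^2) :=
    auxE_fourier
  have h2 : ∀ s, VectorFourier.fourierIntegral 𝐞 volume (innerₗ ℝ).flip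
      (fun t : ℝ => Complex.exp (-π * b * t ^ 2 + 2 * π * (-Complex.I * ξ) * t)) s =
      1 / b ^ (1 / 2 : ℂ) * Complex.exp (-π / b * (s + ξ) ^ 2) := by
    intro s
    have h3 := congrFun (fourier_gaussian_pi' hb (-Complex.I * ξ)) s
    rw [flip_innerₗ]
    refine h3.trans ?_
    congr 4
    linear_combination (-ξ : ℂ) * Complex.I_sq
  simp only [h1, h2, smul_eq_mul] at this
  exact this

lemma aux_rep (ξ : ℝ) :
    ∫ t : ℝ, 1 / (1 + (t:ℂ)^2) *
      Complex.exp (-π * (-Complex.I / π) * t ^ 2 + 2 * π * (-Complex.I * ξ) * t) =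
    1 / (-Complex.I / π : ℂ) ^ (1 / 2 : ℂ) *
      ∫ s : ℝ, auxE s * Complex.exp (-π / (-Complex.I / π) * (s + ξ) ^ 2) := by
  set b : ℝ → ℂ := fun ε => (ε : ℂ) + (-Complex.I / π) with hbdef
  have hb0 : b 0 = -Complex.I / π := by simp [hbdef]
  have hre : ∀ ε, (b ε).re = ε := by
    intro ε
    simp [hbdef, Complex.div_re]
  have hcb : Continuous b := by fun_prop
  have hb0ne : b 0 ≠ 0 := by
    rw [hb0]
    simp [pi_ne_zero]
  have hslit : b 0 ∈ Complex.slitPlane := by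
    rw [hb0, Complex.mem_slitPlane_iff]
    right
    simp [Complex.div_im, pi_ne_zero]
  have tb : Tendsto b (nhdsWithin 0 (Set.Ioi 0)) (nhds (b 0)) :=
    hcb.continuousAt.tendsto.mono_left nhdsWithin_le_nhds
  have hn3 : ∀ t : ℝ, (1 + (t:ℂ)^2) ≠ 0 := by
    intro t
    have : (1 + t^2 : ℝ) ≠ 0 := by positivity
    exact_mod_cast this
  have L : Tendsto (fun ε => ∫ t : ℝ, 1 / (1 + (t:ℂ)^2) *
      Complex.exp (-π * b ε * t ^ 2 + 2 * π * (-Complex.I * ξ) * t))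
      (nhdsWithin 0 (Set.Ioi 0)) (nhds (∫ t : ℝ, 1 / (1 + (t:ℂ)^2) *
      Complex.exp (-π * b 0 * t ^ 2 + 2 * π * (-Complex.I * ξ) * t))) := by
    apply tendsto_integral_filter_of_dominated_convergence (fun t : ℝ => (1 + t^2)⁻¹)
    · refine Eventually.of_forall fun ε => Continuous.aestronglyMeasurable ?_
      exact (continuous_const.div (by fun_prop) hn3).mul (by fun_prop)
    · filter_upwards [self_mem_nhdsWithin] with ε hε
      refine Eventually.of_forall fun t => ?_
      have e1 : ‖1 / (1 + (t:ℂ)^2)‖ = (1 + t^2)⁻¹ := by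
        have : (1 + (t:ℂ)^2) = ((1 + t^2 : ℝ) : ℂ) := by push_cast; rfl
        rw [this, norm_div, norm_one, Complex.norm_of_nonneg (by positivity), one_div]
      rw [norm_mul, e1, Complex.norm_exp]
      have e2 : (-π * b ε * t ^ 2 + 2 * π * (-Complex.I * ξ) * t : ℂ).re = - (π * ε * t^2) := by
        have : (-π * b ε * t ^ 2 + 2 * π * (-Complex.I * ξ) * t : ℂ) =
          ((-(π * t^2) : ℝ) : ℂ) * b ε + ((-2 * π * ξ * t : ℝ) : ℂ) * Complex.I := by
          push_cast; ring
        rw [this, Complex.add_re, Complex.re_ofReal_mul, Complex.re_ofReal_mul, hre]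
        simp; ring
      rw [e2]
      have : 0 < ε := hε
      apply mul_le_of_le_one_right (by positivity)
      rw [Real.exp_le_one_iff, neg_nonpos]
      positivity
    · exact integrable_inv_one_add_sq
    · refine Eventually.of_forall fun t => ?_
      apply Tendsto.const_mul
      apply (Complex.continuous_exp.tendsto _).comp
      exact ((tb.const_mul _).mul_const _).add_const _
  have R : Tendsto (fun ε => ∫ s : ℝ, auxE s * Complex.exp (-π / b ε * (s + ξ) ^ 2))
      (nhdsWithin 0 (Set.Ioi 0)) (nhds (∫ s : ℝ, auxE s * Complex.exp (-π / b 0 * (s + ξ) ^ 2))) := by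
    apply tendsto_integral_filter_of_dominated_convergence (fun s : ℝ => ‖auxE s‖)
    · refine Eventually.of_forall fun ε => Continuous.aestronglyMeasurable ?_
      exact auxE_cont.mul (by fun_prop)
    · filter_upwards [self_mem_nhdsWithin] with ε hε
      refine Eventually.of_forall fun s => ?_
      have : 0 < ε := hε
      rw [norm_mul, Complex.norm_exp]
      apply mul_le_of_le_one_right (by positivity)
      rw [Real.exp_le_one_iff]
      have : (-π / b ε * (s + ξ) ^ 2 : ℂ) = ((-(π * (s + ξ)^2) : ℝ) : ℂ) * (b ε)⁻¹ := by
        push_cast; ring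
      rw [this, Complex.re_ofReal_mul, Complex.inv_re, hre, neg_mul, neg_nonpos]
      have := Complex.normSq_nonneg (b ε)
      positivity
    · exact auxE_int.norm
    · refine Eventually.of_forall fun s => ?_
      apply Tendsto.const_mul
      apply (Complex.continuous_exp.tendsto _).comp
      exact (tendsto_const_nhds.div tb hb0ne).mul_const _
  have C : Tendsto (fun ε => 1 / (b ε) ^ (1 / 2 : ℂ)) (nhdsWithin 0 (Set.Ioi 0))
      (nhds (1 / (b 0) ^ (1 / 2 : ℂ))) := by
    refine tendsto_const_nhds.div (Filter.Tendsto.cpow tb tendsto_const_nhds hslit) ?_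
    simp [Complex.cpow_eq_zero_iff, hb0ne]
  rw [← hb0]
  refine tendsto_nhds_unique L ((C.mul R).congr' ?_)
  filter_upwards [self_mem_nhdsWithin] with ε hε
  rw [aux_eps (b ε) (by rw [hre]; exact hε), ← integral_const_mul]
  congr 1
  ext s
  ring

noncomputable def auxh (s : ℝ) : ℂ := Complex.exp (-2 * π * s - Complex.I * π^2 * s^2)
noncomputable def auxP (s : ℝ) : ℂ := -2 * π - 2 * Complex.I * π^2 * s
noncomputable def auxK (s : ℝ) : ℂ := (auxP s ^ 2 - 2 * Complex.I * π^2) * auxh s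

lemma auxh_norm (s : ℝ) : ‖auxh s‖ = Real.exp (-2 * π * s) := by
  rw [auxh, Complex.norm_exp]
  congr 1
  have : (-2 * π * s - Complex.I * π^2 * s^2 : ℂ) =
    ((-2 * π * s : ℝ) : ℂ) + ((-π^2 * s^2 : ℝ) : ℂ) * Complex.I := by push_cast; ring
  rw [this, Complex.add_re, Complex.re_ofReal_mul]
  simp

lemma auxP_norm (s : ℝ) (hs : 0 ≤ s) : ‖auxP s‖ ≤ 2 * π^2 * Real.exp s := by
  have h1 : ‖auxP s‖ ≤ 2 * π + 2 * π^2 * s := by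
    refine (norm_sub_le _ _).trans ?_
    simp [abs_of_nonneg hs, abs_of_pos pi_pos]
  have h2 := Real.add_one_le_exp s
  have h3 := pi_gt_three
  nlinarith [mul_le_mul_of_nonneg_left h2 (sq_nonneg π)]

lemma auxe_norm (η s : ℝ) : ‖Complex.exp (Complex.I * η * s)‖ = 1 := by
  rw [show Complex.I * η * s = ((η * s : ℝ) : ℂ) * Complex.I by push_cast; ring,
    Complex.norm_exp_ofReal_mul_I]

lemma auxh_int (η : ℝ) :
    IntegrableOn (fun s : ℝ => auxh s * Complex.exp (Complex.I * η * s)) (Set.Ioi 0) := by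
  have h := integrableOn_exp_mul_Ioi (a := -2 * π) (by simp [pi_pos]) 0
  refine Integrable.mono' h (Continuous.aestronglyMeasurable ?_) (Eventually.of_forall fun s => ?_)
  · unfold auxh; fun_prop
  · rw [norm_mul, auxe_norm, auxh_norm, mul_one]

lemma auxK_int (η : ℝ) :
    IntegrableOn (fun s : ℝ => auxK s * Complex.exp (Complex.I * η * s)) (Set.Ioi 0) := by
  have h := integrableOn_exp_mul_Ioi (a := 2 - 2 * π) (by linarith [pi_gt_three]) 0
  refine Integrable.mono' (h.const_mul ((2 * π^2)^2 + 2 * π^2))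
    (Continuous.aestronglyMeasurable ?_) ?_
  · unfold auxK auxP auxh; fun_prop
  · filter_upwards [ae_restrict_mem measurableSet_Ioi] with s hs
    have hs0 : 0 ≤ s := le_of_lt hs
    rw [norm_mul, auxe_norm, mul_one, auxK, norm_mul, auxh_norm]
    have e : Real.exp ((2 - 2 * π) * s) = Real.exp s ^ 2 * Real.exp (-2 * π * s) := by
      rw [← Real.exp_nat_mul, ← Real.exp_add]; congr 1; push_cast; ring
    rw [e, ← mul_assoc]
    gcongr
    refine (norm_sub_le _ _).trans ?_
    rw [norm_pow]
    have h1 := pow_le_pow_left₀ (norm_nonneg _) (auxP_norm s hs0) 2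
    have h2 : ‖2 * Complex.I * (π:ℂ)^2‖ = 2 * π^2 := by simp
    have h3 : 1 ≤ Real.exp s ^ 2 := one_le_pow₀ (Real.one_le_exp hs0)
    rw [h2]
    have h4 : 2 * π^2 ≤ 2 * π^2 * Real.exp s ^ 2 := le_mul_of_one_le_right (by positivity) h3
    calc _ ≤ (2 * π ^ 2 * Real.exp s) ^ 2 + 2 * π^2 * Real.exp s ^ 2 := add_le_add h1 h4
      _ = _ := by ring

lemma aux_half (η : ℝ) :
    (∫ s in Set.Ioi (0:ℝ), auxK s * Complex.exp (Complex.I * η * s)) +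
      η^2 * (∫ s in Set.Ioi (0:ℝ), auxh s * Complex.exp (Complex.I * η * s)) =
      2 * π + Complex.I * η := by
  rw [← integral_const_mul, ← integral_add (auxK_int η) ((auxh_int η).const_mul _)]
  rw [integral_Ioi_of_hasDerivAt_of_tendsto' (m := 0)
    (f := fun s : ℝ => (auxP s - Complex.I * η) * auxh s * Complex.exp (Complex.I * η * s))]
  · simp [auxP, auxh]
    ring
  · intro s _
    have hid : HasDerivAt (fun s : ℝ => (s : ℂ)) 1 s := Complex.ofRealCLM.hasDerivAt
    have hP : HasDerivAt auxP (- (2 * Complex.I * π^2)) s := by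
      have := (hid.const_mul (2 * Complex.I * (π:ℂ)^2)).const_sub (-2 * (π:ℂ))
      rw [mul_one] at this
      exact this
    have hh : HasDerivAt auxh (auxh s * auxP s) s := by
      have := ((hid.const_mul (-2 * (π:ℂ))).sub
        ((hid.fun_pow 2).const_mul (Complex.I * (π:ℂ)^2))).cexp
      refine HasDerivAt.congr_deriv (f := auxh) this ?_
      simp only [auxh, auxP]
      congr 1
      push_cast
      simp
      ring
    have he : HasDerivAt (fun s : ℝ => Complex.exp (Complex.I * η * s))
      (Complex.exp (Complex.I * η * s) * (Complex.I * η * 1)) s :=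
      (hid.const_mul (Complex.I * (η:ℂ))).cexp
    have := ((hP.sub_const (Complex.I * (η:ℂ))).fun_mul hh).fun_mul he
    refine HasDerivAt.congr_deriv this ?_
    simp only [auxK]
    linear_combination (- (η:ℂ)^2 * auxh s * Complex.exp (Complex.I * η * s)) * Complex.I_sq
  · exact (auxK_int η).add ((auxh_int η).const_mul _)
  · have h0 : Tendsto (fun s : ℝ => (2 * π^2 + |η|) * Real.exp (-s)) atTop (nhds 0) := by
      simpa using (Real.tendsto_exp_neg_atTop_nhds_zero).const_mul (2 * π^2 + |η|)
    refine squeeze_zero_norm' ?_ h0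
    filter_upwards [eventually_ge_atTop 0] with s hs
    rw [norm_mul, auxe_norm, mul_one, norm_mul, auxh_norm]
    have h1 : ‖auxP s - Complex.I * η‖ ≤ (2 * π^2 + |η|) * Real.exp s := by
      refine (norm_sub_le _ _).trans ?_
      have h2 : ‖Complex.I * (η:ℂ)‖ = |η| := by simp
      rw [h2, add_mul]
      refine add_le_add (auxP_norm s hs) (le_mul_of_one_le_right (abs_nonneg _) (Real.one_le_exp hs))
    have h3 : Real.exp (-2 * π * s) ≤ Real.exp (-s - s) := by
      apply Real.exp_le_exp.2
      nlinarith [pi_gt_three]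
    calc _ ≤ (2 * π^2 + |η|) * Real.exp s * Real.exp (-s - s) := by gcongr
      _ = _ := by rw [mul_assoc, ← Real.exp_add]; congr 2; ring

lemma aux_RL (c : ℝ) (hc : c ≠ 0) :
    Tendsto (fun ξ : ℝ => ∫ s in Set.Ioi (0:ℝ), auxK s * Complex.exp (Complex.I * (c * ξ : ℝ) * s))
      (cocompact ℝ) (nhds 0) := by
  have h := (Real.zero_at_infty_fourier ((Set.Ioi (0:ℝ)).indicator auxK)).comp
    (tendsto_cocompact_mul_left₀ (a := -c / (2 * π)) (div_ne_zero (neg_ne_zero.2 hc) (by positivity)))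
  refine h.congr fun ξ => ?_
  rw [Function.comp_apply, Real.fourier_eq', ← integral_indicator measurableSet_Ioi]
  congr 1
  ext s
  by_cases hs : s ∈ Set.Ioi (0:ℝ)
  · rw [Set.indicator_of_mem hs, Set.indicator_of_mem hs, smul_eq_mul, mul_comm]
    congr 2
    have hp : (π : ℂ) ≠ 0 := by exact_mod_cast pi_ne_zero
    simp
    field_simp
  · rw [Set.indicator_of_notMem hs, Set.indicator_of_notMem hs, smul_zero]

lemma aux_G (ξ : ℝ) :
    ∫ s : ℝ, auxE s * Complex.exp (-π / (-Complex.I / π) * (s + ξ) ^ 2) =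
    Complex.exp ((-π^2 * ξ^2 : ℝ) * Complex.I) * π *
      ((∫ s in Set.Ioi (0:ℝ), auxh s * Complex.exp (Complex.I * (2 * π^2 * ξ : ℝ) * s)) +
       ∫ s in Set.Ioi (0:ℝ), auxh s * Complex.exp (Complex.I * (-(2 * π^2) * ξ : ℝ) * s)) := by
  have hb : (-π / (-Complex.I / π) : ℂ) = -Complex.I * π^2 := by
    have hp : (π : ℂ) ≠ 0 := by exact_mod_cast pi_ne_zero
    field_simp
    simp
  rw [hb]
  have e1 : ∀ s ∈ Set.Ioi (0:ℝ), Complex.exp ((-π^2 * ξ^2 : ℝ) * Complex.I) * π *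
      (auxh s * Complex.exp (Complex.I * (-(2 * π^2) * ξ : ℝ) * s)) =
      auxE s * Complex.exp (-Complex.I * π^2 * (s + ξ) ^ 2) := by
    intro s hs
    rw [auxE, abs_of_pos (show 0 < s from hs), auxh, ← Complex.exp_add, mul_right_comm,
      ← Complex.exp_add, mul_assoc (π : ℂ), ← Complex.exp_add, mul_comm]
    congr 2
    push_cast
    ring
  have e2 : ∀ s ∈ Set.Ioi (0:ℝ), Complex.exp ((-π^2 * ξ^2 : ℝ) * Complex.I) * π *
      (auxh s * Complex.exp (Complex.I * (2 * π^2 * ξ : ℝ) * s)) =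
      auxE (-s) * Complex.exp (-Complex.I * π^2 * ((-s : ℝ) + ξ) ^ 2) := by
    intro s hs
    rw [auxE, abs_neg, abs_of_pos (show 0 < s from hs), auxh, ← Complex.exp_add, mul_right_comm,
      ← Complex.exp_add, mul_assoc (π : ℂ), ← Complex.exp_add, mul_comm]
    congr 2
    push_cast
    ring
  rw [(aux_split _ ?_ ?_).2]
  · rw [← setIntegral_congr_fun measurableSet_Ioi e1, ← setIntegral_congr_fun measurableSet_Ioi e2,
      integral_const_mul, integral_const_mul, mul_add]
  · exact IntegrableOn.congr_fun ((auxh_int _).const_mul _) e1 measurableSet_Ioi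
  · exact IntegrableOn.congr_fun ((auxh_int _).const_mul _) e2 measurableSet_Ioi

theorem stmt_14 (f : ℝ → ℂ)
    (hf : ∀ t : ℝ, f t = Complex.exp (Complex.I * (t : ℂ) ^ 2) / (1 + (t : ℂ) ^ 2)) :
    Integrable f ∧
    Tendsto (fun ξ : ℝ => π ^ ((3 : ℝ) / 2) * ξ ^ 2 * ‖𝓕 f ξ‖)
      (Filter.cocompact ℝ) (nhds 1) ∧
    (¬ ∃ a : ℝ, 0 < a ∧
      (fun ξ : ℝ => 𝓕 f ξ) =O[Filter.cocompact ℝ] fun ξ : ℝ => Real.exp (-a * |ξ|)) ∧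
    (¬ ∃ r : ℝ, 2 < r ∧
      (fun ξ : ℝ => 𝓕 f ξ) =O[Filter.cocompact ℝ] fun ξ : ℝ => |ξ| ^ (-r)) := by
  have hlim : Tendsto (fun ξ : ℝ => π ^ ((3 : ℝ) / 2) * ξ ^ 2 * ‖𝓕 f ξ‖)
      (Filter.cocompact ℝ) (nhds 1) := by
    have hF : ∀ ξ : ℝ, 𝓕 f ξ = ∫ t : ℝ, 1 / (1 + (t:ℂ)^2) *
      Complex.exp (-π * (-Complex.I / π) * t ^ 2 + 2 * π * (-Complex.I * ξ) * t) := by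
      intro ξ
      rw [Real.fourier_eq']
      congr 1
      ext t
      rw [hf, smul_eq_mul, mul_div_assoc', ← Complex.exp_add, one_div_mul_eq_div]
      congr 2
      have hp : (π : ℂ) ≠ 0 := by exact_mod_cast pi_ne_zero
      have : (-π * (-Complex.I / π) : ℂ) = Complex.I := by field_simp
      rw [this]
      simp
      ring
    have hc : π ^ ((3 : ℝ) / 2) * ‖1 / (-Complex.I / π : ℂ) ^ (1 / 2 : ℂ)‖ = π ^ 2 := by
      have e : ‖(-Complex.I / π : ℂ) ^ (1 / 2 : ℂ)‖ = π ^ (-(1/2) : ℝ) := by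
        have := Complex.norm_cpow_real (-Complex.I / π : ℂ) (1/2)
        push_cast at this
        rw [this]
        simp [abs_of_pos pi_pos]
        rw [Real.inv_rpow pi_pos.le, Real.rpow_neg pi_pos.le]
      rw [norm_div, norm_one, e, one_div, ← Real.rpow_neg pi_pos.le, ← Real.rpow_add pi_pos,
        ← Real.rpow_natCast]
      norm_num
    have key : ∀ ξ : ℝ, π ^ ((3 : ℝ) / 2) * ξ ^ 2 * ‖𝓕 f ξ‖ = (4 * π)⁻¹ * ‖(4 * π : ℂ) -
        ((∫ s in Set.Ioi (0:ℝ), auxK s * Complex.exp (Complex.I * (2 * π^2 * ξ : ℝ) * s)) +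
       ∫ s in Set.Ioi (0:ℝ), auxK s * Complex.exp (Complex.I * (-(2 * π^2) * ξ : ℝ) * s))‖ := by
      intro ξ
      rw [hF, aux_rep, aux_G]
      have h1 := aux_half (2 * π^2 * ξ)
      have h2 := aux_half (-(2 * π^2) * ξ)
      set A := ∫ s in Set.Ioi (0:ℝ), auxK s * Complex.exp (Complex.I * (2 * π^2 * ξ : ℝ) * s)
      set B := ∫ s in Set.Ioi (0:ℝ), auxK s * Complex.exp (Complex.I * (-(2 * π^2) * ξ : ℝ) * s)
      set A' := ∫ s in Set.Ioi (0:ℝ), auxh s * Complex.exp (Complex.I * (2 * π^2 * ξ : ℝ) * s)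
      set B' := ∫ s in Set.Ioi (0:ℝ), auxh s * Complex.exp (Complex.I * (-(2 * π^2) * ξ : ℝ) * s)
      have h3 : (4 * π : ℂ) - (A + B) = ((4 * π^4 * ξ^2 : ℝ) : ℂ) * (A' + B') := by
        push_cast at h1 h2 ⊢
        linear_combination - h1 - h2
      rw [h3, norm_mul, norm_mul, norm_mul, norm_mul, Complex.norm_exp_ofReal_mul_I,
        Complex.norm_of_nonneg (r := 4 * π^4 * ξ^2) (by positivity),
        Complex.norm_of_nonneg (r := π) pi_pos.le, one_mul]
      calc _ = (π ^ ((3 : ℝ) / 2) * ‖1 / (-Complex.I / π : ℂ) ^ (1 / 2 : ℂ)‖) *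
            (ξ ^ 2 * π * ‖A' + B'‖) := by ring
        _ = _ := by
          rw [hc]
          have := pi_ne_zero
          field_simp
    simp_rw [key]
    have hp2 : (2 * π^2) ≠ 0 := by positivity
    have := ((((aux_RL _ hp2).add (aux_RL _ (neg_ne_zero.2 hp2))).const_sub
      (4 * π : ℂ)).norm).const_mul (4 * π)⁻¹
    convert this using 2
    have := pi_ne_zero
    simp [abs_of_pos pi_pos]
    field_simp
  have hr : ¬ ∃ r : ℝ, 2 < r ∧
      (fun ξ : ℝ => 𝓕 f ξ) =O[Filter.cocompact ℝ] fun ξ : ℝ => |ξ| ^ (-r) := by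
    rintro ⟨r, hr, hO⟩
    have h1 : Tendsto (fun ξ : ℝ => |ξ|) (cocompact ℝ) atTop := tendsto_norm_cocompact_atTop
    have h2 : (fun ξ : ℝ => π ^ ((3 : ℝ) / 2) * ξ ^ 2 * ‖𝓕 f ξ‖) =O[cocompact ℝ]
        fun ξ => |ξ| ^ (-(r - 2)) := by
      have h3 := ((isBigO_refl (fun ξ : ℝ => ξ^2) (cocompact ℝ)).const_mul_left
        (π ^ ((3 : ℝ) / 2))).mul hO.norm_left
      refine h3.trans_eventuallyEq ?_
      filter_upwards [h1.eventually_gt_atTop 0] with ξ hξ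
      rw [← sq_abs, ← Real.rpow_natCast, ← Real.rpow_add hξ]
      congr 1
      push_cast
      ring
    have h4 := h2.trans_tendsto ((tendsto_rpow_neg_atTop (by linarith : 0 < r - 2)).comp h1)
    exact zero_ne_one (tendsto_nhds_unique h4 hlim)
  refine ⟨?_, hlim, ?_, hr⟩
  · refine Integrable.mono' integrable_inv_one_add_sq ?_ (Eventually.of_forall fun t => ?_)
    · rw [funext hf]
      refine (Continuous.div (by fun_prop) (by fun_prop) fun t => ?_).aestronglyMeasurable
      have : (1 + t^2 : ℝ) ≠ 0 := by positivity
      exact_mod_cast this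
    · have e1 : (1 + (t:ℂ)^2) = ((1 + t^2 : ℝ) : ℂ) := by push_cast; rfl
      have e2 : Complex.I * (t:ℂ)^2 = ((t^2 : ℝ) : ℂ) * Complex.I := by push_cast; ring
      rw [hf, e1, e2, norm_div, Complex.norm_exp_ofReal_mul_I,
        Complex.norm_of_nonneg (by positivity), one_div]
  · rintro ⟨a, ha, hO⟩
    refine hr ⟨3, by norm_num, hO.trans ?_⟩
    exact ((isLittleO_exp_neg_mul_rpow_atTop ha (-3)).isBigO).comp_tendsto
      (tendsto_norm_cocompact_atTop (E := ℝ))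
end

section
/- For every s ∈ ℂ with 0 < Re s < 2, the function t ↦ t^{s−1}/(1+t²) is Lebesgue integrable on (0,∞) and 𝓜[t ↦ 1/(1+t²)](s) = π / (2·sin(πs/2)). -/
open MeasureTheory Real

lemma aux_cpow (a : ℝ) (ha : 0 < a) (w : ℂ) :
    (a : ℂ) ^ w = Complex.exp ((Real.log a : ℝ) * w) := by
  rw [Complex.cpow_def_of_ne_zero (by exact_mod_cast ha.ne'), Complex.ofReal_log ha.le]

lemma aux_image : (fun t : ℝ => t ^ 2 / (1 + t ^ 2)) '' Set.Ioi 0 = Set.Ioo 0 1 := by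
  ext x
  constructor
  · rintro ⟨t, ht, rfl⟩
    have ht : 0 < t := ht
    refine ⟨by positivity, ?_⟩
    show t ^ 2 / (1 + t ^ 2) < 1
    rw [div_lt_one (by positivity)]
    linarith
  · rintro ⟨h0, h1⟩
    have h2 : 0 < 1 - x := by linarith
    refine ⟨√(x / (1 - x)), Real.sqrt_pos.2 (by positivity), ?_⟩
    show √(x / (1 - x)) ^ 2 / (1 + √(x / (1 - x)) ^ 2) = x
    rw [Real.sq_sqrt (by positivity)]
    field_simp
    ring

lemma aux_deriv (t : ℝ) : HasDerivAt (fun t : ℝ => t ^ 2 / (1 + t ^ 2))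
    (2 * t / (1 + t ^ 2) ^ 2) t := by
  have h := (hasDerivAt_pow 2 t).div ((hasDerivAt_pow 2 t).const_add 1)
    (by positivity : (1 + t ^ 2) ≠ 0)
  refine h.congr_deriv ?_
  congr 1
  push_cast
  ring

lemma aux_inj : Set.InjOn (fun t : ℝ => t ^ 2 / (1 + t ^ 2)) (Set.Ioi 0) := by
  intro a ha b hb h
  have ha : 0 < a := ha
  have hb : 0 < b := hb
  have h : a ^ 2 / (1 + a ^ 2) = b ^ 2 / (1 + b ^ 2) := h
  rw [div_eq_div_iff (by positivity) (by positivity)] at h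
  have : a ^ 2 = b ^ 2 := by linarith
  exact (pow_left_inj₀ ha.le hb.le two_ne_zero).1 this

lemma aux_eq (s : ℂ) (t : ℝ) (ht : 0 < t) :
    |2 * t / (1 + t ^ 2) ^ 2| • (((t ^ 2 / (1 + t ^ 2) : ℝ) : ℂ) ^ (s / 2 - 1) *
      (1 - ((t ^ 2 / (1 + t ^ 2) : ℝ) : ℂ)) ^ ((1 - s / 2) - 1)) =
    2 * ((t : ℂ) ^ (s - 1) / (1 + (t : ℂ) ^ 2)) := by
  have hp : 0 < 1 + t ^ 2 := by positivity
  have e1 : (1 - ((t ^ 2 / (1 + t ^ 2) : ℝ) : ℂ)) = (((1 + t ^ 2)⁻¹ : ℝ) : ℂ) := by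
    rw [← Complex.ofReal_one, ← Complex.ofReal_sub]
    congr 1
    field_simp
    ring
  rw [e1, aux_cpow _ (by positivity), aux_cpow _ (by positivity), aux_cpow _ ht,
    ← Complex.exp_add, Real.log_div (by positivity) (by positivity), Real.log_inv, Real.log_pow,
    abs_of_pos (by positivity), Complex.real_smul]
  have e2 : (((2 : ℕ) * Real.log t - Real.log (1 + t ^ 2) : ℝ) : ℂ) * (s / 2 - 1) +
      ((-Real.log (1 + t ^ 2) : ℝ) : ℂ) * (1 - s / 2 - 1) =
      (Real.log t : ℝ) * (s - 1) + (Real.log (1 + t ^ 2) : ℝ) - (Real.log t : ℝ) := by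
    push_cast
    ring
  rw [e2, Complex.exp_sub, Complex.exp_add, ← Complex.ofReal_exp, ← Complex.ofReal_exp,
    Real.exp_log hp, Real.exp_log ht]
  have h1 : (t : ℂ) ≠ 0 := by exact_mod_cast ht.ne'
  have h2 : (1 + (t : ℂ) ^ 2) ≠ 0 := by exact_mod_cast hp.ne'
  push_cast
  field_simp

/-- For `0 < Re s < 2`, the function `t ↦ t^{s-1}/(1+t²)` is integrable
on `(0, ∞)` and the Mellin transform of `t ↦ 1/(1+t²)` at `s` equals `π/(2 sin(πs/2))`. -/
theorem stmt_16 (s : ℂ) (h0 : 0 < s.re) (h2 : s.re < 2) :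
    IntegrableOn (fun t : ℝ => (t : ℂ) ^ (s - 1) / (1 + (t : ℂ) ^ 2)) (Set.Ioi 0) ∧
    mellin (fun t : ℝ => 1 / (1 + (t : ℂ) ^ 2)) s =
      (π : ℂ) / (2 * Complex.sin ((π : ℂ) * s / 2)) := by
  have hre : (s / 2).re = s.re / 2 := by simp
  have hu : 0 < (s / 2).re := by rw [hre]; linarith
  have hv : 0 < (1 - s / 2).re := by rw [Complex.sub_re, hre, Complex.one_re]; linarith
  have hd : ∀ t ∈ Set.Ioi (0 : ℝ), HasDerivWithinAt (fun t : ℝ => t ^ 2 / (1 + t ^ 2))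
    (2 * t / (1 + t ^ 2) ^ 2) (Set.Ioi 0) t := fun t _ => (aux_deriv t).hasDerivWithinAt
  have hI := integrableOn_image_iff_integrableOn_abs_deriv_smul measurableSet_Ioi hd aux_inj
    (fun x : ℝ => (x : ℂ) ^ (s / 2 - 1) * (1 - (x : ℂ)) ^ ((1 - s / 2) - 1))
  have hE := integral_image_eq_integral_abs_deriv_smul measurableSet_Ioi hd aux_inj
    (fun x : ℝ => (x : ℂ) ^ (s / 2 - 1) * (1 - (x : ℂ)) ^ ((1 - s / 2) - 1))
  rw [aux_image] at hI hE
  have hB := Complex.betaIntegral_convergent hu hv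
  rw [intervalIntegrable_iff_integrableOn_Ioo_of_le zero_le_one] at hB
  have hI2 := hI.1 hB
  rw [integrableOn_congr_fun (fun t (ht : t ∈ Set.Ioi (0:ℝ)) => aux_eq s t ht) measurableSet_Ioi] at hI2
  rw [setIntegral_congr_fun measurableSet_Ioi (fun t (ht : t ∈ Set.Ioi (0:ℝ)) => aux_eq s t ht),
    ← integral_Ioc_eq_integral_Ioo, ← intervalIntegral.integral_of_le zero_le_one,
    integral_const_mul] at hE
  have hG := Complex.Gamma_mul_Gamma_eq_betaIntegral hu hv
  rw [Complex.Gamma_mul_Gamma_one_sub, add_sub_cancel, Complex.Gamma_one, one_mul,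
    Complex.betaIntegral, hE] at hG
  refine ⟨?_, ?_⟩
  · have := hI2.const_mul (1 / 2 : ℂ)
    refine this.congr (Filter.Eventually.of_forall fun t => ?_)
    simp only []
    ring
  · have hm : mellin (fun t : ℝ => 1 / (1 + (t : ℂ) ^ 2)) s =
        ∫ t in Set.Ioi (0 : ℝ), (t : ℂ) ^ (s - 1) / (1 + (t : ℂ) ^ 2) := by
      simp only [mellin, smul_eq_mul, mul_one_div]
    rw [hm, mul_comm 2 (Complex.sin _), ← div_div, mul_div_assoc (π : ℂ) s 2, hG]
    ring
end

section
/- Let f : ℝ → ℂ be defined by f(t) = 1/(t − i)². Then f is Lebesgue integrable on ℝ, and its Fourier transform satisfies 𝓕[f](ξ) = 0 for all ξ ≥ 0 and 𝓕[f](ξ) = 4π²·ξ·e^{2πξ} for all ξ < 0. -/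
open MeasureTheory FourierTransform Real

theorem aux_integrable :
    IntegrableOn (fun x : ℝ => x * Real.exp (-(2 * π) * x)) (Set.Ioi 0) := by
  have h := integrableOn_rpow_mul_exp_neg_mul_rpow (p := 1) (s := 1) (b := 2 * π)
    (by norm_num) one_pos (by positivity)
  simpa using h

theorem aux_integral (a : ℂ) (ha : a.re = 2 * π) :
    ∫ x in Set.Ioi (0 : ℝ), (x : ℂ) * Complex.exp (-a * x) = 1 / a ^ 2 := by
  have hp := Real.pi_pos
  have ha0 : a ≠ 0 := by
    rintro rfl
    simp at ha
  have hn : ∀ x : ℝ, ‖Complex.exp (-a * x)‖ = Real.exp (-(2 * π) * x) := by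
    intro x
    rw [Complex.norm_exp]
    simp [ha]
  have hd : ∀ x : ℝ, HasDerivAt (fun x : ℝ => -((x : ℂ) / a + 1 / a ^ 2) * Complex.exp (-a * x))
      ((x : ℂ) * Complex.exp (-a * x)) x := by
    intro x
    have h1 : HasDerivAt (fun x : ℝ => (x : ℂ)) 1 x := Complex.ofRealCLM.hasDerivAt
    have h2 := (((h1.div_const a).add_const (1 / a ^ 2)).neg).mul ((h1.const_mul (-a)).cexp)
    convert! h2 using 1
    simp only [Pi.neg_apply]
    field_simp
    ring
  have hint : IntegrableOn (fun x : ℝ => (x : ℂ) * Complex.exp (-a * x)) (Set.Ioi 0) := by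
    refine Integrable.mono' aux_integrable (by fun_prop) ?_
    refine (ae_restrict_iff' measurableSet_Ioi).2 (Filter.Eventually.of_forall fun x hx => ?_)
    rw [norm_mul, hn, Complex.norm_real, Real.norm_of_nonneg (le_of_lt hx)]
  have hl0 : Filter.Tendsto (fun x : ℝ => Real.exp (-(2 * π) * x)) Filter.atTop (nhds 0) := by
    have := Real.tendsto_exp_neg_atTop_nhds_zero.comp
      (Filter.tendsto_id.const_mul_atTop (show 0 < 2 * π by positivity))
    refine this.congr fun x => ?_
    simp
  have hl1 : Filter.Tendsto (fun x : ℝ => x * Real.exp (-(2 * π) * x)) Filter.atTop (nhds 0) := by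
    have := ((Real.tendsto_pow_mul_exp_neg_atTop_nhds_zero 1).comp
      (Filter.tendsto_id.const_mul_atTop (show 0 < 2 * π by positivity))).const_mul (1 / (2 * π))
    rw [mul_zero] at this
    refine this.congr fun x => ?_
    simp
    field_simp
  have e0 : Filter.Tendsto (fun x : ℝ => Complex.exp (-a * x)) Filter.atTop (nhds 0) := by
    rw [tendsto_zero_iff_norm_tendsto_zero]
    exact hl0.congr fun x => (hn x).symm
  have e1 : Filter.Tendsto (fun x : ℝ => (x : ℂ) * Complex.exp (-a * x))
      Filter.atTop (nhds 0) := by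
    rw [tendsto_zero_iff_norm_tendsto_zero]
    have := hl1.norm
    rw [norm_zero] at this
    refine this.congr fun x => ?_
    rw [norm_mul, norm_mul, hn, Complex.norm_real, Real.norm_of_nonneg (Real.exp_pos _).le]
  have hlim : Filter.Tendsto (fun x : ℝ => -((x : ℂ) / a + 1 / a ^ 2) * Complex.exp (-a * x))
      Filter.atTop (nhds 0) := by
    have := (e1.const_mul (-(1 / a))).add (e0.const_mul (-(1 / a ^ 2)))
    simp only [mul_zero, add_zero] at this
    refine this.congr fun x => ?_
    ring
  rw [integral_Ioi_of_hasDerivAt_of_tendsto' (fun x _ => hd x) hint hlim]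
  simp

/-- For `f(t) = 1/(t - i)²`, `f` is integrable on `ℝ`, `𝓕[f](ξ) = 0` for
all `ξ ≥ 0`, and `𝓕[f](ξ) = 4π² ξ e^{2πξ}` for all `ξ < 0`. -/
theorem stmt_17 (f : ℝ → ℂ)
    (hf : ∀ t : ℝ, f t = 1 / ((t : ℂ) - Complex.I) ^ 2) :
    Integrable f ∧
    (∀ ξ : ℝ, 0 ≤ ξ → 𝓕 f ξ = 0) ∧
    (∀ ξ : ℝ, ξ < 0 → 𝓕 f ξ = ((4 * π ^ 2 * ξ * Real.exp (2 * π * ξ) : ℝ) : ℂ)) := by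
  have hp := Real.pi_pos
  have hne : ∀ t : ℝ, (t : ℂ) - Complex.I ≠ 0 := by
    intro t h
    have := congrArg Complex.im h
    simp at this
  have hfi : Integrable f := by
    have hc : Continuous f := by
      rw [show f = fun t : ℝ => 1 / ((t : ℂ) - Complex.I) ^ 2 from funext hf]
      exact continuous_const.div (by fun_prop) (fun t => pow_ne_zero 2 (hne t))
    refine Integrable.mono' integrable_inv_one_add_sq hc.aestronglyMeasurable
      (Filter.Eventually.of_forall fun t => le_of_eq ?_)
    rw [hf, norm_div, norm_pow, ← Complex.normSq_eq_norm_sq, Complex.normSq_apply]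
    simp
    ring
  let H : ℝ → ℂ := fun x => ((4 * π ^ 2 * (max x 0 * Real.exp (-(2 * π) * x)) : ℝ) : ℂ)
  have hHc : Continuous H := by fun_prop
  have hH0 : ∀ x, x ∉ Set.Ioi (0 : ℝ) → H x = 0 := by
    intro x hx
    simp only [Set.mem_Ioi, not_lt] at hx
    simp [H, max_eq_right hx]
  have hHi : Integrable H := by
    rw [← integrableOn_iff_integrable_of_support_subset (s := Set.Ioi (0 : ℝ))
      (Function.support_subset_iff'.2 hH0)]
    refine IntegrableOn.congr_fun (f := fun x : ℝ =>
      ((4 * π ^ 2 * (x * Real.exp (-(2 * π) * x)) : ℝ) : ℂ)) ?_ ?_ measurableSet_Ioi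
    · exact (aux_integrable.const_mul (4 * π ^ 2)).ofReal
    · intro x hx
      simp only [H, max_eq_left (le_of_lt (Set.mem_Ioi.1 hx))]
  have hFH : 𝓕 H = -f := by
    ext t
    rw [Real.fourier_real_eq_integral_exp_smul,
      ← setIntegral_eq_integral_of_forall_compl_eq_zero (s := Set.Ioi (0 : ℝ))
        (fun x hx => by rw [hH0 x hx, smul_zero])]
    have : ∀ x ∈ Set.Ioi (0 : ℝ), Complex.exp (↑(-2 * π * x * t) * Complex.I) • H x
        = (4 * π ^ 2 : ℂ) * ((x : ℂ) * Complex.exp (-(2 * π + 2 * π * t * Complex.I) * x)) := by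
      intro x hx
      simp only [H, max_eq_left (le_of_lt (Set.mem_Ioi.1 hx)), smul_eq_mul]
      rw [show (-(2 * π + 2 * π * t * Complex.I) * x : ℂ)
        = ↑(-2 * π * x * t) * Complex.I + ((-(2 * π) * x : ℝ) : ℂ) by push_cast; ring,
        Complex.exp_add]
      push_cast
      ring
    rw [setIntegral_congr_fun measurableSet_Ioi this, integral_const_mul,
      aux_integral _ (by simp), Pi.neg_apply, hf]
    have hI : (2 * π + 2 * π * t * Complex.I : ℂ) = 2 * π * Complex.I * (t - Complex.I) := by
      linear_combination (2 * π : ℂ) * Complex.I_mul_I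
    have hpc : (π : ℂ) ≠ 0 := by exact_mod_cast hp.ne'
    have := hne t
    rw [hI, mul_pow, mul_pow, Complex.I_sq]
    field_simp
    ring
  have key : ∀ ξ, 𝓕 f ξ = -H (-ξ) := by
    intro ξ
    have h1 := hHc.fourierInv_fourier_eq hHi (by rw [hFH]; exact hfi.neg)
    have h2 := congrFun h1 (-ξ)
    rw [hFH, Real.fourierInv_eq_fourier_neg, neg_neg] at h2
    rw [← h2, Real.fourier_real_eq, Real.fourier_real_eq, ← integral_neg]
    simp
  refine ⟨hfi, fun ξ hξ => ?_, fun ξ hξ => ?_⟩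
  · rw [key, hH0 _ (by simpa using hξ), neg_zero]
  · rw [key]
    simp only [H, max_eq_left (show 0 ≤ -ξ by linarith)]
    rw [show -(2 * π) * -ξ = 2 * π * ξ by ring]
    push_cast
    ring
end

section
/- For every y ∈ ℝ, the series ∑_{n=1}^∞ 1/((y−n)² + 1/n²) converges; let f : ℝ → ℝ denote its sum. Then for every integer n ≥ 1 one has f(n) ≥ n², while for every integer n ≥ 1 one has f(n + 1/2) ≤ 8 + π²/3. In particular, f takes values ≥ c infinitely often and values ≤ 8 + π²/3 infinitely often for every c > 0, so f is unbounded but does not tend to +∞. -/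
open Filter Real

lemma aux_pos (y : ℝ) (n : ℕ) : 0 < (y - ((n : ℝ) + 1)) ^ 2 + 1 / ((n : ℝ) + 1) ^ 2 := by
  positivity

lemma aux_summable (y : ℝ) : Summable (fun n : ℕ =>
      1 / ((y - ((n : ℝ) + 1)) ^ 2 + 1 / ((n : ℝ) + 1) ^ 2)) := by
  have hs : Summable (fun n : ℕ => 4 * (1 / ((n : ℝ) + 1) ^ 2)) := by
    have := (summable_nat_add_iff 1).2 hasSum_zeta_two.summable
    push_cast at this
    exact this.mul_left 4
  refine Summable.of_norm_bounded_eventually_nat hs ?_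
  obtain ⟨N, hN⟩ := exists_nat_gt (2 * |y|)
  filter_upwards [eventually_ge_atTop N] with n hn
  have hn' : (N : ℝ) ≤ n := by exact_mod_cast hn
  rw [Real.norm_of_nonneg (one_div_pos.2 (aux_pos y n)).le]
  have hp : (0 : ℝ) < (n : ℝ) + 1 := by positivity
  have h1 : y ≤ |y| := le_abs_self y
  have h2 : ((n : ℝ) + 1) ^ 2 / 4 ≤ (y - ((n : ℝ) + 1)) ^ 2 + 1 / ((n : ℝ) + 1) ^ 2 := by
    have : 0 ≤ 1 / ((n : ℝ) + 1) ^ 2 := by positivity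
    nlinarith
  calc _ ≤ 1 / (((n : ℝ) + 1) ^ 2 / 4) := one_div_le_one_div_of_le (by positivity) h2
    _ = _ := by field_simp

lemma aux_g_le (j : ℕ) : 1 / ((j : ℝ) + 1 / 2) ^ 2 ≤ (if j = 0 then 4 else 0) + 1 / (j : ℝ) ^ 2 := by
  rcases Nat.eq_zero_or_pos j with rfl | hj
  · norm_num
  · have hj' : (0 : ℝ) < j := by exact_mod_cast hj
    rw [if_neg hj.ne', zero_add]
    apply one_div_le_one_div_of_le (by positivity)
    gcongr
    linarith

lemma aux_hasSum : HasSum (fun j : ℕ => (if j = 0 then (4 : ℝ) else 0) + 1 / (j : ℝ) ^ 2)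
    (4 + π ^ 2 / 6) :=
  (hasSum_ite_eq 0 (4 : ℝ)).add hasSum_zeta_two

lemma aux_half_s18 (n : ℕ) :
    ∑' k : ℕ, 1 / (((n : ℝ) + 1 / 2 - ((k : ℝ) + 1)) ^ 2 + 1 / ((k : ℝ) + 1) ^ 2)
      ≤ 8 + π ^ 2 / 3 := by
  have hs := aux_summable ((n : ℝ) + 1 / 2)
  rw [← hs.sum_add_tsum_nat_add n]
  have key : ∀ (k j : ℕ), ((n : ℝ) + 1 / 2 - ((k : ℝ) + 1)) ^ 2 = ((j : ℝ) + 1 / 2) ^ 2 →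
      1 / (((n : ℝ) + 1 / 2 - ((k : ℝ) + 1)) ^ 2 + 1 / ((k : ℝ) + 1) ^ 2)
      ≤ (if j = 0 then 4 else 0) + 1 / (j : ℝ) ^ 2 := by
    intro k j h
    rw [h]
    refine le_trans ?_ (aux_g_le j)
    apply one_div_le_one_div_of_le (by positivity)
    have : 0 ≤ 1 / ((k : ℝ) + 1) ^ 2 := by positivity
    linarith
  have hA : ∑ k ∈ Finset.range n,
      1 / (((n : ℝ) + 1 / 2 - ((k : ℝ) + 1)) ^ 2 + 1 / ((k : ℝ) + 1) ^ 2) ≤ 4 + π ^ 2 / 6 := by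
    rw [← Finset.sum_range_reflect]
    refine le_trans (Finset.sum_le_sum (fun j hj => key (n - 1 - j) j ?_))
      (sum_le_hasSum (Finset.range n) (fun j _ => ?_) aux_hasSum)
    · have hj := Finset.mem_range.1 hj
      obtain ⟨m, rfl⟩ : ∃ m, n = j + 1 + m := ⟨n - (j + 1), by omega⟩
      have : j + 1 + m - 1 - j = m := by omega
      rw [this]
      push_cast
      ring
    · split_ifs <;> positivity
  have hB := ((summable_nat_add_iff n).2 hs).tsum_le_tsum (fun i => key (i + n) i (by
    push_cast; ring)) aux_hasSum.summable
  rw [aux_hasSum.tsum_eq] at hB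
  linarith


/-- The series `∑_{n≥1} 1/((y-n)² + 1/n²)` converges for every `y ∈ ℝ`;
its sum `f` satisfies `f(n) ≥ n²` and `f(n + 1/2) ≤ 8 + π²/3` for every integer `n ≥ 1`.
In particular `f` is unbounded but does not tend to `+∞`. -/
theorem stmt_18 :
    (∀ y : ℝ, Summable (fun n : ℕ =>
      1 / ((y - ((n : ℝ) + 1)) ^ 2 + 1 / ((n : ℝ) + 1) ^ 2))) ∧
    ∀ f : ℝ → ℝ,
      (∀ y : ℝ, f y = ∑' n : ℕ, 1 / ((y - ((n : ℝ) + 1)) ^ 2 + 1 / ((n : ℝ) + 1) ^ 2)) →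
      (∀ n : ℕ, 1 ≤ n → (n : ℝ) ^ 2 ≤ f n) ∧
      (∀ n : ℕ, 1 ≤ n → f ((n : ℝ) + 1 / 2) ≤ 8 + π ^ 2 / 3) ∧
      ¬ BddAbove (Set.range f) ∧
      ¬ Tendsto f atTop atTop := by
  refine ⟨aux_summable, fun f hf => ?_⟩
  have h1 : ∀ n : ℕ, 1 ≤ n → (n : ℝ) ^ 2 ≤ f n := by
    intro n hn
    obtain ⟨m, rfl⟩ : ∃ m, n = m + 1 := ⟨n - 1, by omega⟩
    rw [hf]
    refine le_trans (le_of_eq ?_) ((aux_summable ((m + 1 : ℕ) : ℝ)).le_tsum m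
      (fun k _ => (one_div_pos.2 (aux_pos _ k)).le))
    push_cast
    simp
  have h2 : ∀ n : ℕ, 1 ≤ n → f ((n : ℝ) + 1 / 2) ≤ 8 + π ^ 2 / 3 := by
    intro n _
    rw [hf]
    exact aux_half_s18 n
  refine ⟨h1, h2, ?_, ?_⟩
  · rintro ⟨B, hB⟩
    obtain ⟨N, hN⟩ := exists_nat_gt B
    have h3 := h1 (N + 1) (by omega)
    have h4 := hB (Set.mem_range_self ((N + 1 : ℕ) : ℝ))
    push_cast at h3 h4
    have : (0 : ℝ) ≤ N := by positivity
    nlinarith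
  · intro ht
    have hu : Tendsto (fun n : ℕ => (n : ℝ) + 1 / 2) atTop atTop :=
      tendsto_atTop_add_const_right _ _ tendsto_natCast_atTop_atTop
    obtain ⟨n, hn, hn1⟩ := (((ht.comp hu).eventually_gt_atTop (8 + π ^ 2 / 3)).and
      (eventually_ge_atTop 1)).exists
    exact absurd (h2 n hn1) (not_le.2 hn)
end

section
/- Let n ≥ 2 be a natural number and define f : ℝ → ℂ by f(t) = e^{i t^n}/(1 + t²). Then f is Lebesgue integrable on ℝ and differentiable on ℝ, but its derivative f' is not Lebesgue integrable on ℝ. -/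
open MeasureTheory

/-- For `n ≥ 2` and `f(t) = e^{it^n}/(1+t²)`, `f` is Lebesgue integrable
on `ℝ` and differentiable on `ℝ`, but its derivative is not Lebesgue integrable on `ℝ`. -/
theorem stmt_19 (n : ℕ) (hn : 2 ≤ n) (f : ℝ → ℂ)
    (hf : ∀ t : ℝ, f t = Complex.exp (Complex.I * (t : ℂ) ^ n) / (1 + (t : ℂ) ^ 2)) :
    Integrable f ∧ (∀ t : ℝ, DifferentiableAt ℝ f t) ∧ ¬ Integrable (deriv f) := by
  have hE : ∀ t : ℝ, ‖Complex.exp (Complex.I * (t : ℂ) ^ n)‖ = 1 := by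
    intro t
    have := Complex.norm_exp_ofReal_mul_I (t ^ n)
    rw [mul_comm] at this
    push_cast at this
    exact this
  have hne : ∀ t : ℝ, (1 + (t : ℂ) ^ 2) ≠ 0 := by
    intro t
    have h : (1 + t ^ 2 : ℝ) ≠ 0 := by positivity
    exact_mod_cast h
  have hder : ∀ t : ℝ, HasDerivAt f (Complex.exp (Complex.I * (t : ℂ) ^ n) *
      (((-(2 * t) / (1 + t ^ 2) ^ 2 : ℝ) : ℂ)
        + ((n * t ^ (n - 1) / (1 + t ^ 2) : ℝ) : ℂ) * Complex.I)) t := by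
    intro t
    have h1 : HasDerivAt (fun s : ℝ => (s : ℂ)) 1 t := Complex.ofRealCLM.hasDerivAt
    have h2 := (((h1.pow n).const_mul Complex.I).cexp).div ((h1.pow 2).const_add 1) (hne t)
    have h3 : f = fun s : ℝ => Complex.exp (Complex.I * (s : ℂ) ^ n) / (1 + (s : ℂ) ^ 2) :=
      funext hf
    rw [h3]
    refine h2.congr_deriv ?_
    have := hne t
    simp only [Pi.pow_apply]
    push_cast
    field_simp
    ring
  have hc : Continuous f := continuous_iff_continuousAt.2 fun t => (hder t).continuousAt
  refine ⟨?_, fun t => (hder t).differentiableAt, ?_⟩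
  · refine integrable_inv_one_add_sq.mono' hc.aestronglyMeasurable ?_
    refine Filter.Eventually.of_forall fun t => ?_
    rw [hf, norm_div, hE]
    have h : ‖(1 + (t : ℂ) ^ 2)‖ = 1 + t ^ 2 := by
      have : (1 + (t : ℂ) ^ 2) = ((1 + t ^ 2 : ℝ) : ℂ) := by push_cast; rfl
      rw [this, Complex.norm_real, Real.norm_of_nonneg (by positivity)]
    rw [h, one_div]
  · intro hi
    refine not_integrableOn_Ioi_inv (a := 1) ?_
    refine Integrable.mono' (hi.norm.integrableOn (s := Set.Ioi 1))
      measurable_inv.aestronglyMeasurable ?_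
    refine (ae_restrict_mem measurableSet_Ioi).mono fun t ht => ?_
    have ht1 : (1 : ℝ) < t := ht
    rw [(hder t).deriv, norm_mul, hE, one_mul, Real.norm_of_nonneg (by positivity)]
    refine le_trans ?_ (Complex.abs_im_le_norm _)
    refine le_trans ?_ (le_abs_self _)
    have him : ∀ a b : ℝ, ((a : ℂ) + (b : ℂ) * Complex.I).im = b := by
      intro a b; simp
    rw [him]
    have hp : t ≤ t ^ (n - 1) := le_self_pow₀ ht1.le (by omega)
    have hn' : (2 : ℝ) ≤ n := by exact_mod_cast hn
    rw [inv_eq_one_div, div_le_div_iff₀ (by positivity) (by positivity)]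
    have : 2 * t ≤ n * t ^ (n - 1) := by gcongr
    nlinarith
end
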